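/- Let f : ℂ → ℂ be an entire function, let τ ≥ 0, γ > 0 and M ≥ 0. Suppose that ∫_{-∞}^{∞} |f(x + iy)| dx ≤ M·e^{τ y} for every y ∈ [0, γ], and that sup_{0 ≤ y ≤ γ} |f(x + iy)| → 0 as |x| → ∞. Then for every real a, |∫_{-∞}^{∞} e^{i a x} f(x) dx| ≤ M·e^{-γ(a - τ)}. -/

import Mathlib

open MeasureTheory Real Complex

/-!
Multiplying `f` by `z ↦ e^{iaz}`, whose modulus at height `y` is `e^{-ay}`, preserves holomorphy,
integrability on horizontal lines and uniform decay at both ends of a strip. By Cauchy's theorem on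
rectangles of growing width, the line integral of the product is the same at every height, and at
height `γ` the triangle inequality bounds it by `e^{-aγ} ∫ |f(x + iγ)| dx`.
-/

section

open Set Filter Bornology
open scoped Topology Interval

section UniformDecay

variable {ι α E F : Type*} [SeminormedAddCommGroup E] [SeminormedAddCommGroup F]

lemma tendstoUniformlyOn_zero_iff_norm_le {G : ι → α → E} {l : Filter ι} {s : Set α} :
    TendstoUniformlyOn G 0 l s ↔ ∀ ε > 0, ∀ᶠ i in l, ∀ y ∈ s, ‖G i y‖ ≤ ε := by
  simp only [Metric.tendstoUniformlyOn_iff, Pi.zero_apply, dist_zero_left]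
  refine ⟨fun h ε hε ↦ (h ε hε).mono fun i hi y hy ↦ (hi y hy).le, fun h ε hε ↦ ?_⟩
  exact (h (ε / 2) (half_pos hε)).mono fun i hi y hy ↦ (hi y hy).trans_lt (half_lt_self hε)

lemma tendstoUniformlyOn_zero_cobounded_iff [SeminormedAddCommGroup ι] {G : ι → α → E}
    {s : Set α} :
    TendstoUniformlyOn G 0 (cobounded ι) s ↔
      ∀ ε > 0, ∃ R : ℝ, ∀ i, R ≤ ‖i‖ → ∀ y ∈ s, ‖G i y‖ ≤ ε := by
  simp [tendstoUniformlyOn_zero_iff_norm_le, hasBasis_cobounded_norm.eventually_iff]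

lemma tendstoUniformlyOn_zero_of_norm_le_mul {G : ι → α → E} {H : ι → α → F} {l : Filter ι}
    {s : Set α} {C : ℝ} (hH : TendstoUniformlyOn H 0 l s)
    (hGH : ∀ᶠ i in l, ∀ y ∈ s, ‖G i y‖ ≤ C * ‖H i y‖) :
    TendstoUniformlyOn G 0 l s := by
  rw [tendstoUniformlyOn_zero_iff_norm_le] at hH ⊢
  intro ε hε
  have hC : 0 < |C| + 1 := by positivity
  filter_upwards [hGH, hH (ε / (|C| + 1)) (by positivity)] with i hle hsmall y hy
  calc ‖G i y‖ ≤ C * ‖H i y‖ := hle y hy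
    _ ≤ (|C| + 1) * (ε / (|C| + 1)) := by
        gcongr
        · linarith [le_abs_self C]
        · exact hsmall y hy
    _ = ε := mul_div_cancel₀ ε hC.ne'

end UniformDecay

lemma norm_exp_I_mul_ofReal_mul (a : ℝ) (z : ℂ) :
    ‖Complex.exp (I * a * z)‖ = Real.exp (-(a * z.im)) := by
  simp [Complex.norm_exp]

section HorizontalLines

variable {E : Type*} [NormedAddCommGroup E] [NormedSpace ℂ E] {f : ℂ → E} {b c : ℝ}

lemma continuousOn_im_preimage_Icc_of_diffContOnCl (hbc : b < c)
    (hf : DiffContOnCl ℂ f (im ⁻¹' Ioo b c)) : ContinuousOn f (im ⁻¹' Icc b c) := by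
  simpa only [closure_preimage_im, closure_Ioo hbc.ne] using hf.continuousOn

lemma integral_rect_boundary_eq_zero_of_diffContOnCl (hbc : b < c)
    (hf : DiffContOnCl ℂ f (im ⁻¹' Ioo b c)) (T : ℝ) :
    (∫ x : ℝ in -T..T, f (x + b * I)) - (∫ x : ℝ in -T..T, f (x + c * I)) +
      I • (∫ y : ℝ in b..c, f (T + y * I)) - I • (∫ y : ℝ in b..c, f ((-T : ℝ) + y * I)) = 0 := by
  refine integral_boundary_rect_eq_zero_of_continuousOn_of_differentiableOn f ⟨-T, b⟩ ⟨T, c⟩ ?_ ?_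
  · rw [uIcc_of_le hbc.le]
    exact (continuousOn_im_preimage_Icc_of_diffContOnCl hbc hf).mono inter_subset_right
  · rw [min_eq_left hbc.le, max_eq_right hbc.le]
    exact hf.differentiableOn.mono inter_subset_right

lemma tendsto_integral_vertical_of_tendstoUniformlyOn {l : Filter ℝ} [l.IsCountablyGenerated]
    (hf : ContinuousOn f (im ⁻¹' [[b, c]]))
    (hdecay : TendstoUniformlyOn (fun x y : ℝ ↦ f (x + y * I)) 0 l [[b, c]]) :
    Tendsto (fun x : ℝ ↦ ∫ y in b..c, f (x + y * I)) l (𝓝 0) := by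
  have hcont (x : ℝ) : ContinuousOn (fun y : ℝ ↦ f (x + y * I)) [[b, c]] :=
    hf.comp (by fun_prop) fun y hy ↦ by simpa using hy
  simpa using hdecay.tendsto_intervalIntegral_of_continuousOn (.of_forall hcont)

theorem integral_horizontal_eq_of_diffContOnCl (hbc : b < c)
    (hf : DiffContOnCl ℂ f (im ⁻¹' Ioo b c))
    (hb : Integrable fun x : ℝ ↦ f (x + b * I)) (hc : Integrable fun x : ℝ ↦ f (x + c * I))
    (hdecay : TendstoUniformlyOn (fun x y : ℝ ↦ f (x + y * I)) 0 (cobounded ℝ) (Icc b c)) :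
    ∫ x : ℝ, f (x + b * I) = ∫ x : ℝ, f (x + c * I) := by
  have hcont := continuousOn_im_preimage_Icc_of_diffContOnCl hbc hf
  rw [← uIcc_of_le hbc.le] at hcont hdecay
  rw [IsOrderBornology.cobounded_eq] at hdecay
  have hvert := tendsto_sup.1 (tendsto_integral_vertical_of_tendstoUniformlyOn hcont hdecay)
  have hlower := intervalIntegral_tendsto_integral hb tendsto_neg_atTop_atBot tendsto_id
  have hupper := intervalIntegral_tendsto_integral hc tendsto_neg_atTop_atBot tendsto_id
  have hright := hvert.2.const_smul I
  have hleft := (hvert.1.comp tendsto_neg_atTop_atBot).const_smul I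
  have hlim := (((hlower.sub hupper).add hright).sub hleft).congr
    (integral_rect_boundary_eq_zero_of_diffContOnCl hbc hf)
  simpa [sub_eq_zero] using tendsto_nhds_unique hlim tendsto_const_nhds

lemma integrable_exp_mul_smul_horizontal (a : ℝ)
    (hf : Integrable fun x : ℝ ↦ f (x + c * I)) :
    Integrable fun x : ℝ ↦ Complex.exp (I * a * (x + c * I)) • f (x + c * I) := by
  refine hf.bdd_smul (Real.exp (-(a * c)))
    (Continuous.aestronglyMeasurable (by fun_prop)) (.of_forall fun x ↦ ?_)
  simp [norm_exp_I_mul_ofReal_mul]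

lemma tendstoUniformlyOn_exp_mul_smul_of_isCompact (a : ℝ) {l : Filter ℝ} {s : Set ℝ}
    (hs : IsCompact s) (hf : TendstoUniformlyOn (fun x y : ℝ ↦ f (x + y * I)) 0 l s) :
    TendstoUniformlyOn (fun x y : ℝ ↦ Complex.exp (I * a * (x + y * I)) • f (x + y * I)) 0 l s := by
  obtain ⟨C, hC⟩ := hs.exists_bound_of_continuousOn
    (f := fun y : ℝ ↦ Real.exp (-(a * y))) (by fun_prop)
  refine tendstoUniformlyOn_zero_of_norm_le_mul (C := C) hf (.of_forall fun x y hy ↦ ?_)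
  rw [norm_smul, norm_exp_I_mul_ofReal_mul]
  gcongr
  simpa using hC y hy

theorem exp_smul_integral_fourier_horizontal_eq (hbc : b < c)
    (hf : DiffContOnCl ℂ f (im ⁻¹' Ioo b c))
    (hb : Integrable fun x : ℝ ↦ f (x + b * I)) (hc : Integrable fun x : ℝ ↦ f (x + c * I))
    (hdecay : TendstoUniformlyOn (fun x y : ℝ ↦ f (x + y * I)) 0 (cobounded ℝ) (Icc b c))
    (a : ℝ) :
    Complex.exp (-(a * b)) • ∫ x : ℝ, Complex.exp (I * a * x) • f (x + b * I) =
      Complex.exp (-(a * c)) • ∫ x : ℝ, Complex.exp (I * a * x) • f (x + c * I) := by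
  have hexp : Differentiable ℂ fun z : ℂ ↦ Complex.exp (I * a * z) := by fun_prop
  have hshift := integral_horizontal_eq_of_diffContOnCl hbc (hexp.diffContOnCl.smul hf)
    (integrable_exp_mul_smul_horizontal a hb) (integrable_exp_mul_smul_horizontal a hc)
    (tendstoUniformlyOn_exp_mul_smul_of_isCompact a isCompact_Icc hdecay)
  have hsplit (x y : ℝ) :
      Complex.exp (I * a * (x + y * I)) = Complex.exp (-(a * y)) * Complex.exp (I * a * x) := by
    rw [← Complex.exp_add]
    congr 1
    linear_combination (a * y : ℂ) * I_mul_I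
  simpa only [hsplit, mul_smul, integral_smul] using hshift

end HorizontalLines

end

theorem fourier_integral_bound_of_contour_shift_general
    {E : Type*} [NormedAddCommGroup E] [NormedSpace ℂ E] {f : ℂ → E} {τ γ M : ℝ} (hγ : 0 < γ)
    (hf : DiffContOnCl ℂ f (im ⁻¹' Set.Ioo 0 γ))
    (hint₀ : Integrable fun x : ℝ ↦ f x)
    (hintγ : Integrable fun x : ℝ ↦ f (x + γ * I))
    (hbound : ∫ x : ℝ, ‖f (x + γ * I)‖ ≤ M * Real.exp (τ * γ))
    (hdecay : TendstoUniformlyOn (fun x y : ℝ ↦ f (x + y * I)) 0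
      (Bornology.cobounded ℝ) (Set.Icc 0 γ))
    (a : ℝ) :
    ‖∫ x : ℝ, Complex.exp (I * a * x) • f x‖ ≤ M * Real.exp (-γ * (a - τ)) := by
  have hshift : ∫ x : ℝ, Complex.exp (I * a * x) • f x =
      Complex.exp (-(a * γ)) • ∫ x : ℝ, Complex.exp (I * a * x) • f (x + γ * I) := by
    simpa using exp_smul_integral_fourier_horizontal_eq hγ hf (by simpa using hint₀) hintγ hdecay a
  calc ‖∫ x : ℝ, Complex.exp (I * a * x) • f x‖
      = Real.exp (-(a * γ)) * ‖∫ x : ℝ, Complex.exp (I * a * x) • f (x + γ * I)‖ := by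
        simp [hshift, norm_smul, Complex.norm_exp]
    _ ≤ Real.exp (-(a * γ)) * ∫ x : ℝ, ‖Complex.exp (I * a * x) • f (x + γ * I)‖ := by
        gcongr
        exact norm_integral_le_integral_norm _
    _ = Real.exp (-(a * γ)) * ∫ x : ℝ, ‖f (x + γ * I)‖ := by
        simp [norm_smul, norm_exp_I_mul_ofReal_mul]
    _ ≤ Real.exp (-(a * γ)) * (M * Real.exp (τ * γ)) := by gcongr
    _ = M * Real.exp (-γ * (a - τ)) := by
        rw [mul_left_comm, ← Real.exp_add]
        ring_nf

/-- **Exponential bound on the Fourier integral.** If `f` is entire, integrable on the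
horizontal lines at heights `y ∈ [0, γ]` with `∫ |f(x+iy)| dx ≤ M e^{τ y}`, and decays
uniformly as `|x| → ∞`, then `|∫ e^{iax} f(x) dx| ≤ M e^{-γ(a-τ)}` for every real `a`. -/
theorem fourier_integral_bound_of_contour_shift
    (f : ℂ → ℂ) (τ γ M : ℝ) (hτ : 0 ≤ τ) (hγ : 0 < γ) (hM : 0 ≤ M)
    (hent : Differentiable ℂ f)
    (hint : ∀ y ∈ Set.Icc (0 : ℝ) γ,
      Integrable (fun x : ℝ => f ((x : ℂ) + y * Complex.I)))
    (hbound : ∀ y ∈ Set.Icc (0 : ℝ) γ,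
      (∫ x : ℝ, ‖f ((x : ℂ) + y * Complex.I)‖) ≤ M * Real.exp (τ * y))
    (hdecay : ∀ ε > 0, ∃ X : ℝ, ∀ x : ℝ, X ≤ |x| →
      ∀ y ∈ Set.Icc (0 : ℝ) γ, ‖f ((x : ℂ) + y * Complex.I)‖ ≤ ε)
    (a : ℝ) :
    ‖∫ x : ℝ, Complex.exp (Complex.I * a * x) * f (x : ℂ)‖
      ≤ M * Real.exp (-γ * (a - τ)) :=
  have h₀ : (0 : ℝ) ∈ Set.Icc 0 γ := Set.left_mem_Icc.2 hγ.le
  have hγ' : γ ∈ Set.Icc 0 γ := Set.right_mem_Icc.2 hγ.le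
  fourier_integral_bound_of_contour_shift_general hγ hent.diffContOnCl
    (by simpa using hint 0 h₀) (hint γ hγ') (hbound γ hγ')
    (tendstoUniformlyOn_zero_cobounded_iff.2 hdecay) a
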